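/- An element P ∈ C₆ is a minimal projection if and only if it has one of the following forms: (1) the matrix with 1 in entry (3,3) and all other entries 0; (2) [[0,0,0],[0,α,a],[0,a⋄,α⁻¹‖a‖²]] with α ∈ ℝ∖{0}, a ∈ 𝕆_ℝ and α = α² + ‖a‖²; (3) [[α,a,b],[a⋄,α⁻¹‖a‖²,α⁻¹(a⋄⬝b)],[b⋄,α⁻¹(b⋄⬝a),α⁻¹‖b‖²]] with α ∈ ℝ∖{0}, a, b ∈ 𝕆_ℝ and α = α² + ‖a‖² + ‖b‖² (real and complex scalars being regarded as elements of ℂ·1 ⊆ 𝕆). -/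

import Mathlib

/-!
Write `U_P Y = 2 (P∘Y)∘P − (P∘P)∘Y`, so that `{P, X, P} = U_P (X*)`. Elements of `C₆` are written
`herm α β γ a b c`, with diagonal `α, β, γ` and upper off-diagonal entries `a, b, c`.

Minimal projections have one of the three forms. For a diagonal matrix unit `E_kk` the entries of
`U_P E_kk` are simply the products `P_ik ⬝ P_kj` (`Uop_e0`, `Uop_e1`). If `α ≠ 0`, then
`U_P E_11 = t P`, the (1,1) entry gives `t = α`, and the remaining entries express `β`, `γ` and `c`
through `α`, `a`, `b`. If `α = 0`, the (1,1) entry of `P∘P = P` says `‖a‖² + ‖b‖² = 0`; since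
`P* = P` makes `a` and `b` real octonions, both vanish, and the same argument is applied to `E_22`,
or, if also `β = 0`, to the (2,2) entry of `P∘P = P`.

Conversely, each of the three forms satisfies the six relations collected in `RankOne`, which say
that all two-by-two minors of `P` vanish. For such `P` one has `P∘P = tr(P) P` (`RankOne.jord_self`) and
`U_P Y = T(P, Y) P`, with `T` the trace form (`RankOne.Uop_herm`); as `tr(P) = 1` in all three
cases, `P` is a minimal projection. The identity `U_P Y = T(P, Y) P` is linear in `Y`, and the
permutations of the three indices reduce it to `Y = E_11` and to `Y` supported on the entries
(1,2) and (2,1) (`Uop_offdiag`). In the latter case it follows from the linearized alternative laws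
`x(y⋄z) + y(x⋄z) = 2⟨x,y⟩z` and the adjointness of right multiplications.
-/

noncomputable section

open Matrix

/-- The biquaternions `ℍ_ℂ`. -/
abbrev HC : Type := Quaternion ℂ

/-- The `ℂ`-linear quaternion conjugation `x ↦ x⋄` on `ℍ_ℂ`. -/
def qdia (x : HC) : HC := ⟨x.re, -x.imI, -x.imJ, -x.imK⟩

/-- Coefficientwise complex conjugation `x ↦ x̄` on `ℍ_ℂ`. -/
def qbar (x : HC) : HC :=
  ⟨starRingEnd ℂ x.re, starRingEnd ℂ x.imI, starRingEnd ℂ x.imJ, starRingEnd ℂ x.imK⟩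

/-- The complex octonions `𝕆`, modelled as pairs of biquaternions. -/
abbrev Oct : Type := HC × HC

/-- Cayley–Dickson multiplication on `𝕆`. -/
def omul (x y : Oct) : Oct :=
  (x.1 * y.1 - y.2 * qdia x.2, qdia x.1 * y.2 + y.1 * x.2)

/-- The octonion unit `1 = (1, 0)`. -/
def oone : Oct := (1, 0)

/-- The linear involution `x ↦ x⋄` on `𝕆`. -/
def odia (x : Oct) : Oct := (qdia x.1, -x.2)

/-- The conjugation `x ↦ x̄` on `𝕆`. -/
def obar (x : Oct) : Oct := (qbar x.1, qbar x.2)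

/-- The conjugate-linear involution `x* = (x⋄)‾` on `𝕆`. -/
def ostar (x : Oct) : Oct := obar (odia x)

/-- `3×3` matrices of complex octonions. -/
abbrev M3O : Type := Matrix (Fin 3) (Fin 3) Oct

/-- Matrix product formed using the octonion multiplication `⬝` on entries. -/
def mmulO (X Y : M3O) : M3O := Matrix.of fun i j => ∑ k : Fin 3, omul (X i k) (Y k j)

/-- The Jordan product `X∘Y = ½(X⬝Y + Y⬝X)` on `M₃(𝕆)`. -/
def jord (X Y : M3O) : M3O := (2⁻¹ : ℂ) • (mmulO X Y + mmulO Y X)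

/-- The transpose with `⋄` applied entrywise, `Xᵈ`. -/
def mdia (X : M3O) : M3O := Matrix.of fun i j => odia (X j i)

/-- The involution `X*`: the conjugation `x ↦ x̄` applied entrywise. -/
def mstar (X : M3O) : M3O := Matrix.of fun i j => obar (X i j)

/-- The Cartan factor of type 6: `C₆ = H₃(𝕆) = {X ∈ M₃(𝕆) : Xᵈ = X}`. -/
def H3O : Set M3O := {X | mdia X = X}

/-- The triple product `{X,Y,Z} = (X∘Y*)∘Z + (Z∘Y*)∘X − (X∘Z)∘Y*` on `C₆`. -/
def trip (X Y Z : M3O) : M3O :=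
  jord (jord X (mstar Y)) Z + jord (jord Z (mstar Y)) X - jord (jord X Z) (mstar Y)

/-- The identity matrix `𝟏` of `M₃(𝕆)`. -/
def oneM : M3O := Matrix.of fun i j => if i = j then oone else 0

/-- A Jordan `*`-automorphism of `C₆`: a (ℂ-)linear bijection of `C₆ = H₃(𝕆)` onto itself
preserving the Jordan product `∘` and the involution `*`. -/
def IsJordanStarAut (T : M3O → M3O) : Prop :=
  Set.BijOn T H3O H3O ∧
  (∀ X ∈ H3O, ∀ Y ∈ H3O, T (X + Y) = T X + T Y) ∧
  (∀ (c : ℂ), ∀ X ∈ H3O, T (c • X) = c • T X) ∧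
  (∀ X ∈ H3O, ∀ Y ∈ H3O, T (jord X Y) = jord (T X) (T Y)) ∧
  (∀ X ∈ H3O, T (mstar X) = mstar (T X))

/-- The embedding `ℂ·1 ⊆ 𝕆` of complex scalars into the octonions. -/
def cO (z : ℂ) : Oct := ((⟨z, 0, 0, 0⟩ : HC), 0)

/-- The squared Euclidean norm (as a complex number) of an octonion in coordinates;
for a real octonion `a` (i.e. `obar a = a`) this is `‖a‖²`, the squared Euclidean
norm of `a ∈ ℝ⁸`. -/
def onSq (a : Oct) : ℂ :=
  a.1.re ^ 2 + a.1.imI ^ 2 + a.1.imJ ^ 2 + a.1.imK ^ 2 +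
    a.2.re ^ 2 + a.2.imI ^ 2 + a.2.imJ ^ 2 + a.2.imK ^ 2

/-- A projection in `C₆`: `P ∈ H₃(𝕆)` with `P* = P` and `P∘P = P`. -/
def IsProjO (P : M3O) : Prop := P ∈ H3O ∧ mstar P = P ∧ jord P P = P

/-- A minimal projection in `C₆`: a nonzero projection `P` with `{P,X,P} ∈ ℂ·P`
for every `X ∈ C₆`. -/
def IsMinProjO (P : M3O) : Prop :=
  IsProjO P ∧ P ≠ 0 ∧ ∀ X ∈ H3O, ∃ c : ℂ, trip P X P = c • P

/-! ### Octonion arithmetic -/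

@[simp] lemma qdia_re (x : HC) : (qdia x).re = x.re := rfl
@[simp] lemma qdia_imI (x : HC) : (qdia x).imI = -x.imI := rfl
@[simp] lemma qdia_imJ (x : HC) : (qdia x).imJ = -x.imJ := rfl
@[simp] lemma qdia_imK (x : HC) : (qdia x).imK = -x.imK := rfl
@[simp] lemma qbar_re (x : HC) : (qbar x).re = starRingEnd ℂ x.re := rfl
@[simp] lemma qbar_imI (x : HC) : (qbar x).imI = starRingEnd ℂ x.imI := rfl
@[simp] lemma qbar_imJ (x : HC) : (qbar x).imJ = starRingEnd ℂ x.imJ := rfl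
@[simp] lemma qbar_imK (x : HC) : (qbar x).imK = starRingEnd ℂ x.imK := rfl
@[simp] lemma hc_zero_re : (0 : HC).re = 0 := rfl
@[simp] lemma hc_zero_imI : (0 : HC).imI = 0 := rfl
@[simp] lemma hc_zero_imJ : (0 : HC).imJ = 0 := rfl
@[simp] lemma hc_zero_imK : (0 : HC).imK = 0 := rfl
@[simp] lemma cO_re (z : ℂ) : (cO z).1.re = z := rfl
@[simp] lemma cO_imI (z : ℂ) : (cO z).1.imI = 0 := rfl
@[simp] lemma cO_imJ (z : ℂ) : (cO z).1.imJ = 0 := rfl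
@[simp] lemma cO_imK (z : ℂ) : (cO z).1.imK = 0 := rfl
@[simp] lemma cO_snd (z : ℂ) : (cO z).2 = 0 := rfl

lemma oct_ext {x y : Oct} (h1 : x.1.re = y.1.re) (h2 : x.1.imI = y.1.imI) (h3 : x.1.imJ = y.1.imJ)
    (h4 : x.1.imK = y.1.imK) (h5 : x.2.re = y.2.re) (h6 : x.2.imI = y.2.imI)
    (h7 : x.2.imJ = y.2.imJ) (h8 : x.2.imK = y.2.imK) : x = y :=
  Prod.ext (QuaternionAlgebra.ext h1 h2 h3 h4) (QuaternionAlgebra.ext h5 h6 h7 h8)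

lemma omul_add_left (x y z : Oct) : omul (x + y) z = omul x z + omul y z := by
  apply oct_ext <;> simp [omul] <;> ring
lemma omul_add_right (x y z : Oct) : omul x (y + z) = omul x y + omul x z := by
  apply oct_ext <;> simp [omul] <;> ring
lemma omul_smul_left (c : ℂ) (x y : Oct) : omul (c • x) y = c • omul x y := by
  apply oct_ext <;> simp [omul] <;> ring
lemma omul_smul_right (c : ℂ) (x y : Oct) : omul x (c • y) = c • omul x y := by
  apply oct_ext <;> simp [omul] <;> ring
lemma omul_zero_left (x : Oct) : omul 0 x = 0 := by
  apply oct_ext <;> simp [omul]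
lemma omul_zero_right (x : Oct) : omul x 0 = 0 := by
  apply oct_ext <;> simp [omul]
lemma omul_cO_left (c : ℂ) (x : Oct) : omul (cO c) x = c • x := by
  apply oct_ext <;> simp [omul]
lemma omul_cO_right (c : ℂ) (x : Oct) : omul x (cO c) = c • x := by
  apply oct_ext <;> simp [omul, mul_comm]
lemma odia_odia (x : Oct) : odia (odia x) = x := by
  apply oct_ext <;> simp [odia]
lemma odia_add (x y : Oct) : odia (x + y) = odia x + odia y := by
  apply oct_ext <;> simp [odia] <;> ring
lemma odia_smul (c : ℂ) (x : Oct) : odia (c • x) = c • odia x := by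
  apply oct_ext <;> simp [odia]
lemma odia_zero : odia 0 = 0 := by
  apply oct_ext <;> simp [odia]
lemma odia_cO (c : ℂ) : odia (cO c) = cO c := by
  apply oct_ext <;> simp [odia]
lemma cO_zero : cO 0 = 0 := by
  apply oct_ext <;> simp
lemma cO_add (c d : ℂ) : cO (c + d) = cO c + cO d := by
  apply oct_ext <;> simp
lemma cO_mul (c d : ℂ) : cO (c * d) = c • cO d := by
  apply oct_ext <;> simp
lemma odia_omul (x y : Oct) : odia (omul x y) = omul (odia y) (odia x) := by
  apply oct_ext <;> simp [omul, odia] <;> ring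

/-- The symmetric bilinear form on `𝕆` whose quadratic form is `onSq`, in coordinates. -/
def opol (x y : Oct) : ℂ :=
  x.1.re * y.1.re + x.1.imI * y.1.imI + x.1.imJ * y.1.imJ + x.1.imK * y.1.imK +
    x.2.re * y.2.re + x.2.imI * y.2.imI + x.2.imJ * y.2.imJ + x.2.imK * y.2.imK

lemma omul_odia_self (x : Oct) : omul x (odia x) = cO (onSq x) := by
  apply oct_ext <;> simp [omul, odia, onSq] <;> ring
lemma odia_omul_self (x : Oct) : omul (odia x) x = cO (onSq x) := by
  apply oct_ext <;> simp [omul, odia, onSq] <;> ring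
lemma onSq_odia (x : Oct) : onSq (odia x) = onSq x := by
  simp [odia, onSq]
lemma onSq_omul (x y : Oct) : onSq (omul x y) = onSq x * onSq y := by
  simp [omul, onSq]; ring
lemma onSq_smul (c : ℂ) (x : Oct) : onSq (c • x) = c ^ 2 * onSq x := by
  simp [onSq]; ring
lemma opol_comm (x y : Oct) : opol y x = opol x y := by
  simp only [opol]; ring

set_option maxHeartbeats 1000000 in
/-- The linearization of the left alternative law `x ⬝ (x⋄ ⬝ z) = n(x) z`, with `n = onSq`. -/
lemma alt_left (x y z : Oct) :
    omul x (omul (odia y) z) + omul y (omul (odia x) z) = (2 * opol x y) • z := by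
  apply oct_ext <;> simp [omul, odia, opol] <;> ring
lemma alt_right (x y z : Oct) :
    omul (omul z x) (odia y) + omul (omul z y) (odia x) = (2 * opol x y) • z := by
  have h := congrArg odia (alt_left y x (odia z))
  simpa only [odia_add, odia_smul, odia_omul, odia_odia, opol_comm] using h
lemma trace_form (x y : Oct) :
    omul x (odia y) + omul y (odia x) = (2 * opol x y) • cO 1 := by
  apply oct_ext <;> simp [omul, odia, opol] <;> ring

/-! ### Hermitian matrices and the quadratic operator -/

/-- The element of `H₃(𝕆)` with diagonal `p, q, r` and entries `x, y, z` in positions (1,2), (1,3)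
and (2,3). -/
def herm (p q r : ℂ) (x y z : Oct) : M3O :=
  !![cO p, x, y;
     odia x, cO q, z;
     odia y, odia z, cO r]

/-- The quadratic operator `U_P Y = 2 (P∘Y)∘P − (P∘P)∘Y`; thus `{P, X, P} = U_P (X*)`. -/
def Uop (P Y : M3O) : M3O :=
  jord (jord P Y) P + jord (jord P Y) P - jord (jord P P) Y

lemma omul_sum_left (f : Fin 3 → Oct) (y : Oct) : omul (∑ k, f k) y = ∑ k, omul (f k) y := by
  simp only [Fin.sum_univ_three, omul_add_left]
lemma omul_sum_right (f : Fin 3 → Oct) (y : Oct) : omul y (∑ k, f k) = ∑ k, omul y (f k) := by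
  simp only [Fin.sum_univ_three, omul_add_right]
lemma mmulO_add_left (X Y Z : M3O) : mmulO (X + Y) Z = mmulO X Z + mmulO Y Z := by
  ext1 i j; simp only [mmulO, Matrix.of_apply, Matrix.add_apply, omul_add_left, Finset.sum_add_distrib]
lemma mmulO_add_right (X Y Z : M3O) : mmulO Z (X + Y) = mmulO Z X + mmulO Z Y := by
  ext1 i j; simp only [mmulO, Matrix.of_apply, Matrix.add_apply, omul_add_right, Finset.sum_add_distrib]
lemma mmulO_smul_left (c : ℂ) (X Y : M3O) : mmulO (c • X) Y = c • mmulO X Y := by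
  ext1 i j; simp only [mmulO, Matrix.of_apply, Matrix.smul_apply, omul_smul_left, Finset.smul_sum]
lemma mmulO_smul_right (c : ℂ) (X Y : M3O) : mmulO X (c • Y) = c • mmulO X Y := by
  ext1 i j; simp only [mmulO, Matrix.of_apply, Matrix.smul_apply, omul_smul_right, Finset.smul_sum]

/-- `U_P Y` as the mean of `P(YP)` and `(PY)P`, corrected by two associators. -/
lemma Uop_eq (P Y : M3O) : Uop P Y = (2⁻¹ : ℂ) • (
    (mmulO P (mmulO P Y) - mmulO (mmulO P P) Y) + (mmulO (mmulO Y P) P - mmulO Y (mmulO P P))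
    + mmulO P (mmulO Y P) + mmulO (mmulO P Y) P) := by
  simp only [Uop, jord, mmulO_add_left, mmulO_add_right, mmulO_smul_left, mmulO_smul_right]
  module

lemma Uop_add (P Y Z : M3O) : Uop P (Y + Z) = Uop P Y + Uop P Z := by
  simp only [Uop_eq, mmulO_add_left, mmulO_add_right]
  module
lemma Uop_smul (P Y : M3O) (c : ℂ) : Uop P (c • Y) = c • Uop P Y := by
  simp only [Uop_eq, mmulO_smul_left, mmulO_smul_right]
  module

lemma Uop_apply (P Y : M3O) (i j : Fin 3) : Uop P Y i j = (2⁻¹ : ℂ) • ∑ k, ∑ l, (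
    (omul (P i k) (omul (P k l) (Y l j)) - omul (omul (P i k) (P k l)) (Y l j))
    + (omul (omul (Y i k) (P k l)) (P l j) - omul (Y i k) (omul (P k l) (P l j)))
    + omul (P i k) (omul (Y k l) (P l j)) + omul (omul (P i k) (Y k l)) (P l j)) := by
  have h (A B C : M3O) : mmulO (mmulO A B) C i j = ∑ k, ∑ l, omul (omul (A i k) (B k l)) (C l j) := by
    simp only [mmulO, Matrix.of_apply, omul_sum_left]
    exact Finset.sum_comm
  have h' (A B C : M3O) : mmulO A (mmulO B C) i j = ∑ k, ∑ l, omul (A i k) (omul (B k l) (C l j)) := by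
    simp only [mmulO, Matrix.of_apply, omul_sum_right]
  rw [Uop_eq]
  simp only [Matrix.smul_apply, Matrix.add_apply, Matrix.sub_apply, h, h', Finset.sum_add_distrib, Finset.sum_sub_distrib]

lemma opol_self (x : Oct) : opol x x = onSq x := by simp only [opol, onSq]; ring
lemma opol_odia (x y : Oct) : opol (odia x) (odia y) = opol x y := by simp [opol, odia]
lemma opol_smul_right (c : ℂ) (x y : Oct) : opol x (c • y) = c * opol x y := by simp [opol]; ring
/-- Right multiplication by `c` and by `c⋄` are adjoint for the bilinear form. -/
lemma opol_adj_right (x c b : Oct) : opol (omul x c) b = opol x (omul b (odia c)) := by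
  simp [opol, omul, odia]; ring
lemma cO_eq_smul (c : ℂ) : cO c = c • cO 1 := by rw [← cO_mul, mul_one]
lemma cancel_left (x z : Oct) : omul x (omul (odia x) z) = onSq x • z := by
  have h := alt_left x x z
  rw [opol_self] at h
  linear_combination (norm := module) (2⁻¹ : ℂ) • h
lemma cancel_left' (x z : Oct) : omul (odia x) (omul x z) = onSq x • z := by
  simpa only [odia_odia, onSq_odia] using cancel_left (odia x) z
lemma cancel_right (x z : Oct) : omul (omul z x) (odia x) = onSq x • z := by
  have h := alt_right x x z
  rw [opol_self] at h
  linear_combination (norm := module) (2⁻¹ : ℂ) • h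
lemma cancel_right' (x z : Oct) : omul (omul z (odia x)) x = onSq x • z := by
  simpa only [odia_odia, onSq_odia] using cancel_right (odia x) z

/-! ### Rank-one elements -/

/-- The relations saying that `herm α β γ a b c` has rank at most one: all its two-by-two minors vanish
(equivalently, its Jordan-algebraic adjoint is zero). -/
structure RankOne (α β γ : ℂ) (a b c : Oct) : Prop where
  na : onSq a = α * β
  nb : onSq b = α * γ
  nc : onSq c = β * γ
  ab : omul (odia a) b = α • c
  ac : omul a c = β • b
  bc : omul b (odia c) = γ • a

namespace RankOne
variable {α β γ : ℂ} {a b c : Oct}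
lemma ba (h : RankOne α β γ a b c) : omul (odia b) a = α • odia c := by
  simpa only [odia_omul, odia_odia, odia_smul] using congrArg odia h.ab
lemma ca (h : RankOne α β γ a b c) : omul (odia c) (odia a) = β • odia b := by
  simpa only [odia_omul, odia_odia, odia_smul] using congrArg odia h.ac
lemma cb (h : RankOne α β γ a b c) : omul c (odia b) = γ • odia a := by
  simpa only [odia_omul, odia_odia, odia_smul] using congrArg odia h.bc
/-- The relations are invariant under exchanging the last two indices. -/
lemma swap (h : RankOne α β γ a b c) : RankOne α γ β b a (odia c) where
  na := h.nb
  nb := h.na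
  nc := by rw [onSq_odia, h.nc, mul_comm]
  ab := h.ba
  ac := h.bc
  bc := by rw [odia_odia, h.ac]
/-- The relations are invariant under cyclic permutation of the indices. -/
lemma rotate (h : RankOne α β γ a b c) : RankOne β γ α c (odia a) (odia b) where
  na := h.nc
  nb := by rw [onSq_odia, h.na, mul_comm]
  nc := by rw [onSq_odia, h.nb, mul_comm]
  ab := h.ca
  ac := h.cb
  bc := by rw [odia_odia, h.ab]
end RankOne

set_option maxHeartbeats 1000000 in
/-- `U_P Y = T(P, Y) P` for `P` of rank one and `Y` supported on the entries (1,2) and (2,1). -/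
lemma Uop_offdiag (α β γ : ℂ) (a b c x : Oct) (h : RankOne α β γ a b c) :
    Uop (herm α β γ a b c) (herm 0 0 0 x 0 0) = (2 * opol a x) • herm α β γ a b c := by
  have tr (u v w : Oct) : omul (omul u (odia v)) w + omul (omul v (odia u)) w = (2 * opol u v) • w := by
    rw [← omul_add_left, trace_form, omul_smul_left, omul_cO_left, one_smul]
  have tr' (u v w : Oct) : omul w (omul u (odia v)) + omul w (omul v (odia u)) = (2 * opol u v) • w := by
    rw [← omul_add_right, trace_form, omul_smul_right, omul_cO_right, one_smul]
  have o1 : opol (omul x c) b = γ * opol a x := by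
    rw [opol_adj_right, h.bc, opol_smul_right, opol_comm]
  have o2 : opol (omul (odia x) b) c = γ * opol a x := by
    rw [opol_adj_right, h.cb, opol_smul_right, opol_odia, opol_comm]
  -- The instances of the trace identity and of the linearized alternative laws from which each of
  -- the nine entries is a linear combination, once the rank-one relations are substituted.
  have t1 := trace_form x a
  have t2 := trace_form (odia x) (odia a)
  have t3 := trace_form (omul x c) b
  have t4 := trace_form (omul (odia x) b) c
  have t5 := trace_form (odia (omul x c)) (odia b)
  have t6 := trace_form (odia (omul (odia x) b)) (odia c)
  have u1 := tr x a b
  have u2 := tr (odia x) (odia a) c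
  have u3 := tr' (odia x) (odia a) (odia c)
  have u4 := tr' x a (odia b)
  have v1 := alt_left x a b
  have v2 := alt_left (odia x) (odia a) c
  have v3 := alt_left x a a
  have v4 := alt_left (odia x) (odia a) (odia a)
  have w1 := alt_right (odia x) (odia a) a
  have w2 := alt_right x a (odia a)
  have w3 := alt_right x a (odia b)
  have w4 := alt_right (odia x) (odia a) (odia c)
  rw [opol_odia, o1] at t5
  rw [opol_odia, o2] at t6
  simp only [opol_odia, odia_odia, odia_omul, o1, o2, opol_comm a x, omul_smul_left, omul_smul_right, omul_cO_left, omul_cO_right, h.na, h.ab, h.ac, h.ba, h.ca, omul_odia_self, odia_omul_self] at t1 t2 t3 t4 t5 t6 u1 u2 u3 u4 v1 v2 v3 v4 w1 w2 w3 w4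
  ext1 i j
  rw [Uop_apply]
  have key (S : Oct) (T : Oct) (hS : S = (2:ℂ) • T) : (2⁻¹ : ℂ) • S = T := by rw [hS]; module
  apply key
  fin_cases i <;> fin_cases j <;> 
    simp only [herm, Fin.sum_univ_three, cO_zero, omul_zero_left, omul_zero_right, odia_zero, Matrix.smul_apply, Matrix.of_apply, Matrix.cons_val', Matrix.cons_val, Fin.zero_eta, Fin.mk_one, Fin.reduceFinMk,
      omul_smul_left, omul_smul_right, omul_cO_left, omul_cO_right, h.na, h.nb, h.nc, h.ab, h.ac, h.bc, h.ba, h.ca, h.cb, omul_odia_self, odia_omul_self, cancel_left, cancel_left', cancel_right, cancel_right', add_zero, zero_add, sub_zero, smul_zero]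
  · rw [cO_eq_smul α]
    linear_combination (norm := module) (2*α - γ) • t1 + t3
  · linear_combination (norm := module) v3 + w1
  · linear_combination (norm := module) u1 + v1
  · linear_combination (norm := module) v4 + w2
  · rw [cO_eq_smul β]
    linear_combination (norm := module) (2*β - γ) • t2 + t4
  · linear_combination (norm := module) u2 + v2
  · linear_combination (norm := module) u4 + w3
  · linear_combination (norm := module) u3 + w4
  · rw [cO_eq_smul γ]
    linear_combination (norm := module) t5 + t6

/-- `U` commutes with simultaneous permutations of rows and columns. -/
lemma Uop_submatrix (P Y : M3O) (σ : Equiv.Perm (Fin 3)) :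
    Uop (P.submatrix σ σ) (Y.submatrix σ σ) = (Uop P Y).submatrix σ σ := by
  have h (A B : M3O) : mmulO (A.submatrix σ σ) (B.submatrix σ σ) = (mmulO A B).submatrix σ σ := by
    ext1 i j
    simp only [mmulO, Matrix.submatrix_apply, Matrix.of_apply]
    exact Equiv.sum_comp σ (fun k => omul (A (σ i) k) (B k (σ j)))
  simp only [Uop_eq, h]
  rfl

lemma herm_swap (p q r : ℂ) (x y z : Oct) :
    (herm p q r x y z).submatrix (Equiv.swap 1 2) (Equiv.swap 1 2) = herm p r q y x (odia z) := by
  ext1 i j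
  fin_cases i <;> fin_cases j <;> simp [herm, odia_odia, Equiv.swap_apply_def]

lemma herm_rotate (p q r : ℂ) (x y z : Oct) :
    (herm p q r x y z).submatrix (finRotate 3) (finRotate 3) = herm q r p z (odia x) (odia y) := by
  ext1 i j
  fin_cases i <;> fin_cases j <;> simp [herm, odia_odia]

lemma herm_smul (t p q r : ℂ) (x y z : Oct) :
    t • herm p q r x y z = herm (t * p) (t * q) (t * r) (t • x) (t • y) (t • z) := by
  ext1 i j
  fin_cases i <;> fin_cases j <;> simp [herm, cO_mul, odia_smul, -Prod.smul_mk]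

lemma herm_add (p q r p' q' r' : ℂ) (x y z x' y' z' : Oct) :
    herm p q r x y z + herm p' q' r' x' y' z' =
      herm (p + p') (q + q') (r + r') (x + x') (y + y') (z + z') := by
  ext1 i j
  fin_cases i <;> fin_cases j <;> simp [herm, cO_add, odia_add]

/-- For a diagonal matrix unit the associators in `Uop_apply` cancel. -/
lemma Uop_e0 (P : M3O) (i j : Fin 3) :
    Uop P (herm 1 0 0 0 0 0) i j = omul (P i 0) (P 0 j) := by
  rw [Uop_apply]
  fin_cases i <;> fin_cases j <;>
    simp [herm, Fin.sum_univ_three, cO_zero, odia_zero, omul_zero_left, omul_zero_right,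
      omul_cO_left, omul_cO_right, -Prod.smul_mk] <;> module

lemma Uop_e1 (P : M3O) (i j : Fin 3) :
    Uop P (herm 0 1 0 0 0 0) i j = omul (P i 1) (P 1 j) := by
  rw [Uop_apply]
  fin_cases i <;> fin_cases j <;>
    simp [herm, Fin.sum_univ_three, cO_zero, odia_zero, omul_zero_left, omul_zero_right,
      omul_cO_left, omul_cO_right, -Prod.smul_mk] <;> module

namespace RankOne
variable {α β γ : ℂ} {a b c : Oct}

lemma Uop_e0 (h : RankOne α β γ a b c) :
    Uop (herm α β γ a b c) (herm 1 0 0 0 0 0) = α • herm α β γ a b c := by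
  ext1 i j
  rw [_root_.Uop_e0]
  fin_cases i <;> fin_cases j <;>
    simp [herm, omul_cO_left, omul_cO_right, h.ab, h.ba, odia_omul_self, h.na, h.nb, cO_mul,
      -Prod.smul_mk]

/-- Transport of `U_P Y = t P` along the exchange of the last two indices. -/
lemma of_swap {p q r : ℂ} {x y z : Oct} {t : ℂ}
    (h : Uop (herm α γ β b a (odia c)) (herm p r q y x (odia z)) = t • herm α γ β b a (odia c)) :
    Uop (herm α β γ a b c) (herm p q r x y z) = t • herm α β γ a b c := by
  rw [← herm_swap, ← herm_swap, Uop_submatrix] at h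
  have h' := congrArg (fun M => M.submatrix (Equiv.swap 1 2) (Equiv.swap 1 2)) h
  ext1 i j
  simpa using congrFun (congrFun h' i) j

/-- Transport of `U_P Y = t P` along the cyclic permutation of the indices. -/
lemma of_rotate {p q r : ℂ} {x y z : Oct} {t : ℂ}
    (h : Uop (herm β γ α c (odia a) (odia b)) (herm q r p z (odia x) (odia y)) =
      t • herm β γ α c (odia a) (odia b)) :
    Uop (herm α β γ a b c) (herm p q r x y z) = t • herm α β γ a b c := by
  rw [← herm_rotate, ← herm_rotate, Uop_submatrix] at h
  have h' := congrArg (fun M => M.submatrix (finRotate 3).symm (finRotate 3).symm) h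
  ext1 i j
  simpa using congrFun (congrFun h' i) j

/-- `U_P Y = T(P, Y) P` for `P` of rank one, where `T` is the trace form. -/
lemma Uop_herm (h : RankOne α β γ a b c) (p q r : ℂ) (x y z : Oct) :
    Uop (herm α β γ a b c) (herm p q r x y z) =
      (p * α + q * β + r * γ + 2 * opol a x + 2 * opol b y + 2 * opol c z) •
        herm α β γ a b c := by
  have e0 := h.Uop_e0
  have e1 : Uop (herm α β γ a b c) (herm 0 1 0 0 0 0) = β • herm α β γ a b c :=
    of_rotate (by simpa only [odia_zero] using h.rotate.Uop_e0)
  have e2 : Uop (herm α β γ a b c) (herm 0 0 1 0 0 0) = γ • herm α β γ a b c :=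
    of_swap (of_rotate (by simpa only [odia_zero] using h.swap.rotate.Uop_e0))
  have f0 := Uop_offdiag α β γ a b c x h
  have f1 : Uop (herm α β γ a b c) (herm 0 0 0 0 y 0) = (2 * opol b y) • herm α β γ a b c :=
    of_swap (by simpa only [odia_zero] using Uop_offdiag _ _ _ _ _ _ y h.swap)
  have f2 : Uop (herm α β γ a b c) (herm 0 0 0 0 0 z) = (2 * opol c z) • herm α β γ a b c :=
    of_rotate (by simpa only [odia_zero] using Uop_offdiag _ _ _ _ _ _ z h.rotate)
  have hY : herm p q r x y z = p • herm 1 0 0 0 0 0 + q • herm 0 1 0 0 0 0 + r • herm 0 0 1 0 0 0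
      + herm 0 0 0 x 0 0 + herm 0 0 0 0 y 0 + herm 0 0 0 0 0 z := by
    simp only [herm_smul, herm_add, mul_zero, mul_one, smul_zero, add_zero, zero_add]
  rw [hY]
  simp only [Uop_add, Uop_smul, e0, e1, e2, f0, f1, f2]
  module

/-- `P∘P = tr(P) P` for `P` of rank one. -/
lemma jord_self (h : RankOne α β γ a b c) :
    jord (herm α β γ a b c) (herm α β γ a b c) = (α + β + γ) • herm α β γ a b c := by
  have hm : mmulO (herm α β γ a b c) (herm α β γ a b c) = (α + β + γ) • herm α β γ a b c := by
    ext1 i j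
    fin_cases i <;> fin_cases j <;>
      simp [herm, mmulO, Fin.sum_univ_three, omul_cO_left, omul_cO_right, odia_omul_self,
        omul_odia_self, h.na, h.nb, h.nc, h.ab, h.ac, h.bc, h.ba, h.ca, h.cb, ← cO_mul,
        -Prod.smul_mk, ← cO_add] <;> first | module | (congr 1; ring)
  rw [jord, hm]
  module
end RankOne

/-! ### Conjugation, and coordinates on `C₆` -/

lemma obar_omul (x y : Oct) : obar (omul x y) = omul (obar x) (obar y) := by
  apply oct_ext <;> simp [obar, omul]
lemma obar_odia (x : Oct) : obar (odia x) = odia (obar x) := by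
  apply oct_ext <;> simp [obar, odia]
lemma obar_smul (c : ℂ) (x : Oct) : obar (c • x) = (starRingEnd ℂ c) • obar x := by
  apply oct_ext <;> simp [obar]
lemma obar_cO (c : ℂ) : obar (cO c) = cO (starRingEnd ℂ c) := by
  apply oct_ext <;> simp [obar]
lemma obar_zero : obar 0 = 0 := by
  apply oct_ext <;> simp [obar]
lemma onSq_obar (x : Oct) : onSq (obar x) = starRingEnd ℂ (onSq x) := by
  simp [obar, onSq]
lemma onSq_zero : onSq 0 = 0 := by simp [onSq]
lemma cO_injective : Function.Injective cO := fun x y h => by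
  simpa using congrArg (fun w : Oct => w.1.re) h

lemma mstar_herm (p q r : ℂ) (x y z : Oct) :
    mstar (herm p q r x y z) = herm (starRingEnd ℂ p) (starRingEnd ℂ q) (starRingEnd ℂ r)
      (obar x) (obar y) (obar z) := by
  ext1 i j
  fin_cases i <;> fin_cases j <;> simp [herm, mstar, obar_cO, obar_odia]

lemma herm_mem (p q r : ℂ) (x y z : Oct) : herm p q r x y z ∈ H3O := by
  change mdia _ = _
  ext1 i j
  fin_cases i <;> fin_cases j <;> simp [herm, mdia, odia_cO, odia_odia]

lemma eq_cO_of_odia {x : Oct} (h : odia x = x) : x = cO x.1.re := by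
  have key : ∀ u : ℂ, -u = u → u = 0 := fun u hu => by linear_combination (-1 / 2 : ℂ) * hu
  have h1 := congrArg (fun w : Oct => w.1) h
  have h2 := congrArg (fun w : Oct => w.2) h
  simp only [odia] at h1 h2
  apply oct_ext
  · rfl
  · exact key _ (congrArg (·.imI) h1)
  · exact key _ (congrArg (·.imJ) h1)
  · exact key _ (congrArg (·.imK) h1)
  · exact key _ (congrArg (·.re) h2)
  · exact key _ (congrArg (·.imI) h2)
  · exact key _ (congrArg (·.imJ) h2)
  · exact key _ (congrArg (·.imK) h2)

lemma exists_herm {X : M3O} (hX : X ∈ H3O) : ∃ p q r x y z, X = herm p q r x y z := by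
  have h (i j) : odia (X j i) = X i j := congrFun (congrFun hX i) j
  refine ⟨(X 0 0).1.re, (X 1 1).1.re, (X 2 2).1.re, X 0 1, X 0 2, X 1 2, ?_⟩
  ext1 i j
  fin_cases i <;> fin_cases j <;> simp [herm, h, ← eq_cO_of_odia (h _ _)]

/-- On real octonions `onSq` is positive definite. -/
lemma onSq_real {x : Oct} (hx : obar x = x) : ∃ t : ℝ, 0 ≤ t ∧ onSq x = t ∧ (t = 0 → x = 0) := by
  have hr (u : ℂ) (hu : starRingEnd ℂ u = u) : u = (u.re : ℂ) := (Complex.conj_eq_iff_re.mp hu).symm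
  have e1 := hr _ (congrArg (fun w : Oct => w.1.re) hx)
  have e2 := hr _ (congrArg (fun w : Oct => w.1.imI) hx)
  have e3 := hr _ (congrArg (fun w : Oct => w.1.imJ) hx)
  have e4 := hr _ (congrArg (fun w : Oct => w.1.imK) hx)
  have e5 := hr _ (congrArg (fun w : Oct => w.2.re) hx)
  have e6 := hr _ (congrArg (fun w : Oct => w.2.imI) hx)
  have e7 := hr _ (congrArg (fun w : Oct => w.2.imJ) hx)
  have e8 := hr _ (congrArg (fun w : Oct => w.2.imK) hx)
  refine ⟨x.1.re.re ^ 2 + x.1.imI.re ^ 2 + x.1.imJ.re ^ 2 + x.1.imK.re ^ 2 +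
    x.2.re.re ^ 2 + x.2.imI.re ^ 2 + x.2.imJ.re ^ 2 + x.2.imK.re ^ 2, by positivity, ?_, ?_⟩
  · push_cast
    rw [← e1, ← e2, ← e3, ← e4, ← e5, ← e6, ← e7, ← e8, onSq]
  · intro h
    have key (u : ℂ) (hu : u = (u.re : ℂ)) (h0 : u.re ^ 2 ≤ 0) : u = 0 := by
      rw [hu, pow_eq_zero_iff two_ne_zero |>.mp (le_antisymm h0 (sq_nonneg _)), Complex.ofReal_zero]
    apply oct_ext
    · exact key _ e1 (by nlinarith)
    · exact key _ e2 (by nlinarith)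
    · exact key _ e3 (by nlinarith)
    · exact key _ e4 (by nlinarith)
    · exact key _ e5 (by nlinarith)
    · exact key _ e6 (by nlinarith)
    · exact key _ e7 (by nlinarith)
    · exact key _ e8 (by nlinarith)

/-! ### Minimal projections -/

/-- A real rank-one element of trace one is a minimal projection. -/
lemma RankOne.isMinProjO {α β γ : ℂ} {a b c : Oct} (h : RankOne α β γ a b c)
    (htr : α + β + γ = 1) (hα : starRingEnd ℂ α = α) (hβ : starRingEnd ℂ β = β)
    (hγ : starRingEnd ℂ γ = γ) (ha : obar a = a) (hb : obar b = b) (hc : obar c = c) :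
    IsMinProjO (herm α β γ a b c) := by
  refine ⟨⟨herm_mem _ _ _ _ _ _, by rw [mstar_herm, hα, hβ, hγ, ha, hb, hc],
    by rw [h.jord_self, htr, one_smul]⟩, ?_, ?_⟩
  · intro h0
    have hz (i : Fin 3) : herm α β γ a b c i i = 0 := by rw [h0]; rfl
    have z0 : α = 0 := cO_injective ((hz 0).trans cO_zero.symm)
    have z1 : β = 0 := cO_injective ((hz 1).trans cO_zero.symm)
    have z2 : γ = 0 := cO_injective ((hz 2).trans cO_zero.symm)
    simp [z0, z1, z2] at htr
  · intro X hX
    obtain ⟨p, q, r, x, y, z, rfl⟩ := exists_herm hX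
    rw [show trip _ _ _ = Uop _ (mstar _) from rfl, mstar_herm, h.Uop_herm]
    exact ⟨_, rfl⟩

lemma form_one_eq : (!![0, 0, 0; 0, 0, 0; 0, 0, oone] : M3O) = herm 0 0 1 0 0 0 := by
  rw [herm, cO_zero, odia_zero]; rfl

lemma form_two_eq (β γ : ℂ) (a : Oct) :
    (!![0, 0, 0; 0, cO β, a; 0, odia a, cO γ] : M3O) = herm 0 β γ 0 0 a := by
  rw [herm, cO_zero, odia_zero]

lemma form_three_eq (α β γ : ℂ) (a b : Oct) :
    (!![cO α, a, b;
        odia a, cO β, α⁻¹ • omul (odia a) b;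
        odia b, α⁻¹ • omul (odia b) a, cO γ] : M3O) =
      herm α β γ a b (α⁻¹ • omul (odia a) b) := by
  rw [herm, odia_smul, odia_omul, odia_odia]

/-- The diagonal entries of the equation `P∘P = P`. -/
lemma jord_self_diag (p q r : ℂ) (a b c : Oct)
    (h : jord (herm p q r a b c) (herm p q r a b c) = herm p q r a b c) :
    p ^ 2 + onSq a + onSq b = p ∧ q ^ 2 + onSq a + onSq c = q ∧ r ^ 2 + onSq b + onSq c = r := by
  have h' (i) := congrFun (congrFun h i) i
  have h0 := h' 0
  have h1 := h' 1
  have h2 := h' 2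
  simp [jord, herm, mmulO, Fin.sum_univ_three, omul_cO_left, odia_omul_self, omul_odia_self,
        ← cO_mul, -Prod.smul_mk, ← cO_add, cO_injective.eq_iff] at h0 h1 h2
  refine ⟨?_, ?_, ?_⟩
  · linear_combination h0
  · linear_combination h1
  · linear_combination h2

/-- The minimal projections in `C₆` are exactly the elements of one of the
three displayed forms. -/
theorem statement13 (P : M3O) :
    IsMinProjO P ↔
    (P = !![0, 0, 0; 0, 0, 0; 0, 0, oone]) ∨
    (∃ (α : ℝ) (a : Oct), α ≠ 0 ∧ obar a = a ∧ (α : ℂ) = (α : ℂ) ^ 2 + onSq a ∧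
      P = !![0, 0, 0;
             0, cO (α : ℂ), a;
             0, odia a, cO ((α : ℂ)⁻¹ * onSq a)]) ∨
    (∃ (α : ℝ) (a b : Oct), α ≠ 0 ∧ obar a = a ∧ obar b = b ∧
      (α : ℂ) = (α : ℂ) ^ 2 + onSq a + onSq b ∧
      P = !![cO (α : ℂ), a, b;
             odia a, cO ((α : ℂ)⁻¹ * onSq a), (α : ℂ)⁻¹ • omul (odia a) b;
             odia b, (α : ℂ)⁻¹ • omul (odia b) a, cO ((α : ℂ)⁻¹ * onSq b)]) := by
  constructor
  · rintro ⟨⟨hP, hstar, hidem⟩, hne, hmin⟩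
    obtain ⟨p, q, r, a, b, c, rfl⟩ := exists_herm hP
    rw [mstar_herm] at hstar
    have hs (i j) := congrFun (congrFun hstar i) j
    have hp : starRingEnd ℂ p = p := cO_injective (hs 0 0)
    have hq : starRingEnd ℂ q = q := cO_injective (hs 1 1)
    have ha : obar a = a := hs 0 1
    have hb : obar b = b := hs 0 2
    have hc : obar c = c := hs 1 2
    obtain ⟨d0, d1, d2⟩ := jord_self_diag _ _ _ _ _ _ hidem
    obtain ⟨α, rfl⟩ : ∃ α : ℝ, p = α := ⟨p.re, (Complex.conj_eq_iff_re.mp hp).symm⟩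
    obtain ⟨β, rfl⟩ : ∃ β : ℝ, q = β := ⟨q.re, (Complex.conj_eq_iff_re.mp hq).symm⟩
    by_cases hα : α = 0
    · subst hα
      -- A real idempotent with vanishing (1,1) entry has vanishing first row.
      obtain ⟨s, hs0, hs, has⟩ := onSq_real ha
      obtain ⟨t, ht0, ht, hbt⟩ := onSq_real hb
      have hst : s + t = 0 := by
        have : (s : ℂ) + t = 0 := by
          rw [← hs, ← ht]; simpa using d0
        exact_mod_cast this
      obtain rfl := has (by linarith)
      obtain rfl := hbt (by linarith)
      by_cases hβ : β = 0
      · subst hβ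
        left
        obtain ⟨u, -, hu, hcu⟩ := onSq_real hc
        have hu0 : u = 0 := by
          have : (u : ℂ) = 0 := by rw [← hu]; simpa [onSq_zero] using d1
          exact_mod_cast this
        obtain rfl := hcu hu0
        rw [form_one_eq, Complex.ofReal_zero]
        rw [onSq_zero, add_zero, add_zero] at d2
        have hr : r ≠ 0 := by
          rintro rfl
          apply hne
          ext1 i j
          fin_cases i <;> fin_cases j <;> simp [herm, cO_zero, odia_zero]
        have hr1 : r = 1 := mul_left_cancel₀ hr (by linear_combination d2)
        rw [hr1]
      · right; left
        have hβ' : (β : ℂ) ≠ 0 := Complex.ofReal_ne_zero.mpr hβ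
        obtain ⟨t, ht⟩ := hmin _ (herm_mem 0 1 0 0 0 0)
        change Uop _ (mstar _) = _ at ht
        simp only [mstar_herm, map_zero, map_one, obar_zero] at ht
        have hk (i j) := (Uop_e1 _ i j).symm.trans (congrFun (congrFun ht i) j)
        have k11 : (β : ℂ) * β = t * β := cO_injective <| by
          simpa [herm, omul_cO_left, ← cO_mul, -Prod.smul_mk] using hk 1 1
        have k22 : onSq c = t * r := cO_injective <| by
          simpa [herm, odia_omul_self, ← cO_mul, -Prod.smul_mk] using hk 2 2
        have htβ : t = β := (mul_right_cancel₀ hβ' k11).symm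
        refine ⟨β, c, hβ, hc, ?_, ?_⟩
        · rw [onSq_zero] at d1
          linear_combination -d1
        · rw [form_two_eq, k22, htβ, inv_mul_cancel_left₀ hβ', Complex.ofReal_zero]
    · right; right
      have hα' : (α : ℂ) ≠ 0 := Complex.ofReal_ne_zero.mpr hα
      obtain ⟨t, ht⟩ := hmin _ (herm_mem 1 0 0 0 0 0)
      change Uop _ (mstar _) = _ at ht
      simp only [mstar_herm, map_zero, map_one, obar_zero] at ht
      have hk (i j) := (Uop_e0 _ i j).symm.trans (congrFun (congrFun ht i) j)
      have k00 : (α : ℂ) * α = t * α := cO_injective <| by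
        simpa [herm, omul_cO_left, ← cO_mul, -Prod.smul_mk] using hk 0 0
      have k11 : onSq a = t * β := cO_injective <| by
        simpa [herm, odia_omul_self, ← cO_mul, -Prod.smul_mk] using hk 1 1
      have k22 : onSq b = t * r := cO_injective <| by
        simpa [herm, odia_omul_self, ← cO_mul, -Prod.smul_mk] using hk 2 2
      have k12 : omul (odia a) b = t • c := hk 1 2
      obtain rfl : t = α := (mul_right_cancel₀ hα' k00).symm
      refine ⟨α, a, b, hα, ha, hb, by linear_combination -d0, ?_⟩
      rw [form_three_eq, k11, k22, k12, inv_mul_cancel_left₀ hα', inv_mul_cancel_left₀ hα',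
        inv_smul_smul₀ hα']
  · rintro (rfl | ⟨α, a, hα, ha, htr, rfl⟩ | ⟨α, a, b, hα, ha, hb, htr, rfl⟩)
    · rw [form_one_eq]
      have h : RankOne 0 0 1 0 0 0 := by
        constructor <;> simp [onSq_zero, odia_zero, omul_zero_right]
      exact h.isMinProjO (by simp) (by simp) (by simp) (by simp) obar_zero obar_zero obar_zero
    · have hα' : (α : ℂ) ≠ 0 := Complex.ofReal_ne_zero.mpr hα
      have hn : starRingEnd ℂ (onSq a) = onSq a := by rw [← onSq_obar, ha]
      rw [form_two_eq]
      have h : RankOne 0 α ((α : ℂ)⁻¹ * onSq a) 0 0 a :=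
        { na := by rw [onSq_zero, zero_mul]
          nb := by rw [onSq_zero, zero_mul]
          nc := by rw [mul_inv_cancel_left₀ hα']
          ab := by rw [omul_zero_right]; apply oct_ext <;> simp
          ac := by rw [omul_zero_left, smul_zero]
          bc := by rw [omul_zero_left, smul_zero] }
      refine h.isMinProjO ?_ (by simp) (by simp) (by simp [hn]) obar_zero obar_zero ha
      field_simp
      linear_combination -htr
    · have hα' : (α : ℂ) ≠ 0 := Complex.ofReal_ne_zero.mpr hα
      have hna : starRingEnd ℂ (onSq a) = onSq a := by rw [← onSq_obar, ha]
      have hnb : starRingEnd ℂ (onSq b) = onSq b := by rw [← onSq_obar, hb]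
      rw [form_three_eq]
      have h : RankOne α ((α : ℂ)⁻¹ * onSq a) ((α : ℂ)⁻¹ * onSq b) a b
          ((α : ℂ)⁻¹ • omul (odia a) b) :=
        { na := by rw [mul_inv_cancel_left₀ hα']
          nb := by rw [mul_inv_cancel_left₀ hα']
          nc := by rw [onSq_smul, onSq_omul, onSq_odia]; ring
          ab := by rw [smul_inv_smul₀ hα']
          ac := by rw [omul_smul_right, cancel_left, mul_smul]
          bc := by
            rw [odia_smul, odia_omul, odia_odia, omul_smul_right, cancel_left, mul_smul] }
      refine h.isMinProjO ?_ (by simp) (by simp [hna]) (by simp [hnb]) ha hb ?_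
      · field_simp
        linear_combination -htr
      · simp only [obar_smul, obar_omul, obar_odia, ha, hb, map_inv₀, Complex.conj_ofReal]
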